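/- arXiv:1401.3127 — 5 statements merged into one kernel-verified Lean document; each statement's English description precedes it below -/
import Mathlib

section
/- Define f₀, f₁ : ℝ → ℝ by f₀(x) = 1 − (1 − x)² = 2x − x² and f₁(x) = x². For a binary word b = (b₁,…,b_n) ∈ {0,1}^n, let Z_b(ε) = f_{b₁} ∘ f_{b₂} ∘ ⋯ ∘ f_{b_n}(ε), and let w(b) denote the number of ones in b. Then there exists a constant c > 0 such that Z_b(ε) / ε^{2^{w(b)}} tends to c as ε → 0 from the right; that is, Z_b is a polynomial in ε whose order of vanishing at ε = 0 equals exactly 2^{w(b)}. -/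
/-!
Induction on the word, peeling off the outermost map. If `Z` has leading behaviour `c ε ^ k` at `0⁺`,
then `Z ^ 2` has leading behaviour `c ^ 2 ε ^ (2 k)`, while `1 - (1 - Z) ^ 2 = Z (2 - Z)` has leading
behaviour `2 c ε ^ k`, because `Z → 0`. So each one in the word doubles the order and each zero
keeps it, and the constant stays positive.
-/

/-- `f₀(x) = 1 - (1-x)² = 2x - x²` and `f₁(x) = x²`. -/
def polarF (c : Bool) (x : ℝ) : ℝ := if c then x ^ 2 else 1 - (1 - x) ^ 2

/-- For a binary word `b = (b₁, …, bₙ)` (as a list, `b₁` first),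
`Z_b(ε) = f_{b₁} ∘ f_{b₂} ∘ ⋯ ∘ f_{bₙ}(ε)`, with `f_{bₙ}` applied first. -/
def polarZ : List Bool → ℝ → ℝ
  | [] => id
  | c :: rest => polarF c ∘ polarZ rest

theorem continuous_polarZ (b : List Bool) : Continuous (polarZ b) := by
  induction b with
  | nil => exact continuous_id
  | cons a b ih =>
    refine Continuous.comp ?_ ih
    cases a <;> unfold polarF <;> simp <;> fun_prop

theorem polarZ_zero (b : List Bool) : polarZ b 0 = 0 := by
  induction b with
  | nil => rfl
  | cons a b ih => cases a <;> simp [polarZ, polarF, ih]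

/-- `Z_b(ε) / ε^{2^{w(b)}}` tends to a positive constant `c` as `ε → 0⁺`:
the order of vanishing of the polynomial `Z_b` at `ε = 0` is exactly `2^{w(b)}`,
where `w(b)` is the number of ones in `b`. -/
theorem polarZ_vanishing_order (b : List Bool) :
    ∃ c : ℝ, 0 < c ∧
      Filter.Tendsto (fun ε : ℝ => polarZ b ε / ε ^ (2 ^ b.count true))
        (nhdsWithin 0 (Set.Ioi 0)) (nhds c) := by
  induction b with
  | nil =>
    refine ⟨1, one_pos, tendsto_const_nhds.congr' ?_⟩
    filter_upwards [self_mem_nhdsWithin] with ε hε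
    simp [polarZ, div_self (ne_of_gt (Set.mem_Ioi.mp hε))]
  | cons a b ih =>
    obtain ⟨c, hc, h⟩ := ih
    cases a with
    | true =>
      refine ⟨c ^ 2, by positivity, (h.pow 2).congr fun ε => ?_⟩
      simp [polarZ, polarF, pow_succ, pow_mul, div_mul_div_comm]
    | false =>
      have hZ : Filter.Tendsto (polarZ b) (nhdsWithin 0 (Set.Ioi 0)) (nhds 0) := by
        simpa [polarZ_zero] using ((continuous_polarZ b).tendsto 0).mono_left nhdsWithin_le_nhds
      refine ⟨c * (2 - 0), by linarith, (h.mul (hZ.const_sub 2)).congr fun ε => ?_⟩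
      simp [polarZ, polarF]
      ring
end

section
/- Define f₀, f₁ : ℝ → ℝ by f₀(x) = 1 − (1 − x)² and f₁(x) = x², and for a binary word b ∈ {0,1}^n let Z_b(ε) = f_{b₁} ∘ ⋯ ∘ f_{b_n}(ε) and let w(b) be the number of ones in b. If b, b′ ∈ {0,1}^n satisfy w(b) > w(b′), then the ratio Z_b(ε) / Z_{b′}(ε) tends to 0 as ε → 0 from the right. -/
/-- The order of vanishing of `Z_b` at `0` is exactly `2 ^ w(b)`, with positive leading
coefficient `u 0`. -/
theorem polarZ_eq_pow_mul (b : List Bool) :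
    ∃ u : ℝ → ℝ, Continuous u ∧ 0 < u 0 ∧
      ∀ x, polarZ b x = x ^ (2 ^ b.count true) * u x := by
  induction b with
  | nil => exact ⟨fun _ => 1, continuous_const, one_pos, fun x => by simp [polarZ]⟩
  | cons c b ih =>
    obtain ⟨u, hu, hu0, h⟩ := ih
    cases c with
    | true =>
      refine ⟨fun x => u x ^ 2, by fun_prop, by positivity, fun x => ?_⟩
      simp only [polarZ, Function.comp_apply, polarF, h, if_true, List.count_cons_self, pow_succ 2,
        pow_mul, mul_pow]
    | false =>
      refine ⟨fun x => u x * (2 - x ^ (2 ^ b.count true) * u x), by fun_prop, ?_, fun x => ?_⟩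
      · simpa using hu0
      · simp [polarZ, polarF, h]
        ring

/-- If `b, b' ∈ {0,1}^n` satisfy `w(b) > w(b')`, then `Z_b(ε) / Z_{b'}(ε) → 0`
as `ε → 0⁺`, where `w(·)` counts the number of ones. -/
theorem polarZ_ratio_tendsto_zero (b b' : List Bool)
    (hn : b.length = b'.length) (hw : b'.count true < b.count true) :
    Filter.Tendsto (fun ε : ℝ => polarZ b ε / polarZ b' ε)
      (nhdsWithin 0 (Set.Ioi 0)) (nhds 0) := by
  obtain ⟨u, hu, -, h⟩ := polarZ_eq_pow_mul b
  obtain ⟨v, hv, hv0, h'⟩ := polarZ_eq_pow_mul b'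
  have hlt : 2 ^ b'.count true < 2 ^ b.count true := Nat.pow_lt_pow_right one_lt_two hw
  obtain ⟨k, hk⟩ := Nat.exists_eq_add_of_lt hlt
  have hc : ContinuousAt (fun x : ℝ => x ^ (k + 1) * (u x / v x)) 0 :=
    (continuousAt_id.pow _).mul (hu.continuousAt.div hv.continuousAt hv0.ne')
  have ht := hc.tendsto.mono_left (nhdsWithin_le_nhds (s := Set.Ioi 0))
  simp only [zero_pow (Nat.succ_ne_zero k), zero_mul] at ht
  refine ht.congr' ?_
  filter_upwards [self_mem_nhdsWithin] with x hx
  have hx0 : x ^ (2 ^ b'.count true) ≠ 0 := pow_ne_zero _ (ne_of_gt hx)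
  rw [h, h', hk, add_assoc, pow_add x (2 ^ _), mul_assoc, mul_div_mul_left _ _ hx0, mul_div_assoc]
end

section
/- Define f₀, f₁ : ℝ → ℝ by f₀(x) = 1 − (1 − x)² and f₁(x) = x², and for a binary word b ∈ {0,1}^n let Z_b(ε) = f_{b₁} ∘ ⋯ ∘ f_{b_n}(ε) and let w(b) be the number of ones in b. Then there exists δ > 0 such that for every ε ∈ (0, δ) and every pair of binary words b, b′ ∈ {0,1}^n with w(b) > w(b′), one has Z_b(ε) < Z_{b′}(ε). (Consequently, the polar code of block length N = 2^n designed for transmission over a BEC(ε) with ε sufficiently small — i.e., any selection of row indices minimizing the Bhattacharyya parameters Z — selects indices of maximal Hamming weight of the binary expansion, i.e., is a Reed–Muller code.) -/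
/-- Two-sided estimate of `Z_b(ε)` by the power `ε ^ (2 ^ w(b))`; the bound `Z_b(ε) ≤ 1` is
carried along because `x ≤ f₀ x` needs `x ≤ 1`. -/
lemma polarZ_bounds {ε : ℝ} (h0 : 0 ≤ ε) (h1 : ε ≤ 1) (b : List Bool) :
    ε ^ (2 ^ b.count true) ≤ polarZ b ε ∧ polarZ b ε ≤ 1 ∧
      polarZ b ε ≤ 2 ^ (2 ^ b.length) * ε ^ (2 ^ b.count true) := by
  induction b with
  | nil =>
    simp only [polarZ, List.count_nil, List.length_nil, id, pow_zero, pow_one]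
    exact ⟨le_rfl, h1, by linarith⟩
  | cons c l ih =>
    obtain ⟨hlow, hone, hup⟩ := ih
    have hpow : 0 ≤ ε ^ (2 ^ l.count true) := by positivity
    have hZ : 0 ≤ polarZ l ε := hpow.trans hlow
    cases c with
    | true =>
      simp only [polarZ, Function.comp, polarF, if_true, List.count_cons_self, List.length_cons]
      rw [pow_succ 2 (l.count true), pow_succ 2 l.length, pow_mul, pow_mul, ← mul_pow]
      exact ⟨pow_le_pow_left₀ hpow hlow 2, pow_le_one₀ hZ hone, pow_le_pow_left₀ hZ hup 2⟩
    | false =>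
      have hcount : (false :: l).count true = l.count true := by simp
      rw [hcount]
      simp only [polarZ, Function.comp, polarF, Bool.false_eq_true, if_false, List.length_cons]
      refine ⟨by nlinarith, by nlinarith [sq_nonneg (1 - polarZ l ε)], ?_⟩
      -- `2 * C ≤ C ^ 2` for the constant `C = 2 ^ (2 ^ l.length) ≥ 2`.
      have hC : (2 : ℝ) ≤ 2 ^ (2 ^ l.length) :=
        le_self_pow₀ (by norm_num) (by positivity)
      rw [pow_succ 2 l.length, pow_mul]
      set C : ℝ := 2 ^ (2 ^ l.length)
      have h2C : 2 * C ≤ C ^ 2 := by nlinarith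
      calc 1 - (1 - polarZ l ε) ^ 2 ≤ 2 * polarZ l ε := by nlinarith [sq_nonneg (polarZ l ε)]
        _ ≤ 2 * C * ε ^ (2 ^ l.count true) := by linarith
        _ ≤ C ^ 2 * ε ^ (2 ^ l.count true) := mul_le_mul_of_nonneg_right h2C hpow

/-- There exists `δ > 0` such that for every `ε ∈ (0, δ)` and every pair of
binary words `b, b' ∈ {0,1}^n` with `w(b) > w(b')`, one has `Z_b(ε) < Z_{b'}(ε)`.
Consequently, for `ε` small enough the polar code for `BEC(ε)` selects the indices
whose binary expansions have maximal Hamming weight, i.e., it is a Reed–Muller code. -/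
theorem polarZ_eventually_sorted_by_weight (n : ℕ) :
    ∃ δ : ℝ, 0 < δ ∧ ∀ ε ∈ Set.Ioo (0 : ℝ) δ, ∀ b b' : List Bool,
      b.length = n → b'.length = n → b'.count true < b.count true →
        polarZ b ε < polarZ b' ε := by
  have hC : (1 : ℝ) ≤ 2 ^ (2 ^ n) := one_le_pow₀ (by norm_num)
  refine ⟨1 / 2 ^ (2 ^ n), by positivity, ?_⟩
  rintro ε ⟨hε0, hεδ⟩ b b' hb hb' hw
  have hε1 : ε ≤ 1 := hεδ.le.trans (div_le_one_of_le₀ hC (by positivity))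
  have hCε : 2 ^ (2 ^ n) * ε < 1 := by
    rwa [lt_div_iff₀ (by positivity), mul_comm] at hεδ
  have hexp : 2 ^ b'.count true + 1 ≤ 2 ^ b.count true :=
    Nat.pow_lt_pow_right (by norm_num) hw
  have hup := (polarZ_bounds hε0.le hε1 b).2.2
  rw [hb] at hup
  calc polarZ b ε ≤ 2 ^ (2 ^ n) * ε ^ (2 ^ b.count true) := hup
    _ ≤ 2 ^ (2 ^ n) * ε ^ (2 ^ b'.count true + 1) :=
      mul_le_mul_of_nonneg_left (pow_le_pow_of_le_one hε0.le hε1 hexp) (by positivity)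
    _ = 2 ^ (2 ^ n) * ε * ε ^ (2 ^ b'.count true) := by ring
    _ < 1 * ε ^ (2 ^ b'.count true) := mul_lt_mul_of_pos_right hCε (by positivity)
    _ = ε ^ (2 ^ b'.count true) := one_mul _
    _ ≤ polarZ b' ε := (polarZ_bounds hε0.le hε1 b').1
end

section
/- Define f₀, f₁ : ℝ → ℝ by f₀(x) = 1 − (1 − x)² and f₁(x) = x². For any n, any binary word b = (b₁,…,b_n) ∈ {0,1}^n with exactly k ones, and any x ∈ [0,1], the composition in which all k squarings are applied first (innermost) and then all n−k applications of f₀, namely f₀^{∘(n−k)}(f₁^{∘k}(x)), is less than or equal to f_{b₁} ∘ f_{b₂} ∘ ⋯ ∘ f_{b_n}(x). That is, among all orderings of a fixed multiset of k copies of f₁ and n−k copies of f₀, the composed value is minimized by applying all f₁ first and then all f₀. -/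
lemma polarF_mem (c : Bool) {x : ℝ} (hx : x ∈ Set.Icc (0 : ℝ) 1) :
    polarF c x ∈ Set.Icc (0 : ℝ) 1 := by
  obtain ⟨h0, h1⟩ := hx
  cases c <;> simp only [polarF, Set.mem_Icc, if_true, Bool.false_eq_true, if_false] <;>
    constructor <;> nlinarith

lemma polarF_iterate_mem (c : Bool) (m : ℕ) {x : ℝ} (hx : x ∈ Set.Icc (0 : ℝ) 1) :
    (polarF c)^[m] x ∈ Set.Icc (0 : ℝ) 1 := by
  induction m with
  | zero => exact hx
  | succ m ih =>
    rw [Function.iterate_succ_apply']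
    exact polarF_mem c ih

lemma polarZ_mem (b : List Bool) {x : ℝ} (hx : x ∈ Set.Icc (0 : ℝ) 1) :
    polarZ b x ∈ Set.Icc (0 : ℝ) 1 := by
  induction b with
  | nil => exact hx
  | cons c rest ih => exact polarF_mem c ih

lemma polarF_mono (c : Bool) {x y : ℝ} (hx : x ∈ Set.Icc (0 : ℝ) 1)
    (hy : y ∈ Set.Icc (0 : ℝ) 1) (hxy : x ≤ y) : polarF c x ≤ polarF c y := by
  obtain ⟨hx0, hx1⟩ := hx
  obtain ⟨hy0, hy1⟩ := hy
  cases c <;> simp only [polarF] <;> norm_num <;> nlinarith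

lemma polarF_swap (x : ℝ) :
    polarF false (polarF true x) ≤ polarF true (polarF false x) := by
  simp only [polarF]
  norm_num
  nlinarith [sq_nonneg (x * (1 - x))]

lemma polarF_iterate_swap (m : ℕ) {x : ℝ} (hx : x ∈ Set.Icc (0 : ℝ) 1) :
    (polarF false)^[m] (polarF true x) ≤ polarF true ((polarF false)^[m] x) := by
  induction m with
  | zero => exact le_rfl
  | succ m ih =>
    rw [Function.iterate_succ_apply', Function.iterate_succ_apply']
    exact (polarF_mono false (polarF_iterate_mem _ _ (polarF_mem _ hx))
      (polarF_mem _ (polarF_iterate_mem _ _ hx)) ih).trans (polarF_swap _)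

/-- The result with the number of `f₀`'s expressed as `b.count false`, which avoids
truncated subtraction in the induction. -/
lemma iterate_le_polarZ (b : List Bool) {x : ℝ} (hx : x ∈ Set.Icc (0 : ℝ) 1) :
    (polarF false)^[b.count false] ((polarF true)^[b.count true] x) ≤ polarZ b x := by
  induction b with
  | nil => exact le_rfl
  | cons c rest ih =>
    have hm := polarF_iterate_mem true (rest.count true) hx
    have step := polarF_mono c (polarF_iterate_mem false (rest.count false) hm)
      (polarZ_mem rest hx) ih
    cases c with
    | false =>
      rw [List.count_cons_self, List.count_cons_of_ne (by decide),
        Function.iterate_succ_apply']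
      exact step
    | true =>
      rw [List.count_cons_self, List.count_cons_of_ne (by decide),
        Function.iterate_succ_apply']
      exact (polarF_iterate_swap _ hm).trans step


/-- Among all orderings of a fixed multiset of `k` copies of `f₁` and `n - k` copies
of `f₀`, the composed value on `x ∈ [0,1]` is minimized by applying all `f₁`
(squarings) first (innermost) and then all `f₀`:
`f₀^{∘(n-k)}(f₁^{∘k}(x)) ≤ f_{b₁} ∘ ⋯ ∘ f_{bₙ}(x)`. -/
theorem iterate_f1_then_f0_min (n k : ℕ) (b : List Bool)
    (hlen : b.length = n) (hk : b.count true = k) :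
    ∀ x ∈ Set.Icc (0 : ℝ) 1,
      (polarF false)^[n - k] ((polarF true)^[k] x) ≤ polarZ b x := by
  intro x hx
  have h : n - k = b.count false := by
    have := List.count_true_add_count_false b
    omega
  rw [h, ← hk]
  exact iterate_le_polarZ b hx
end

section
/- Let g : [0,1] → [0,1] be any function satisfying x ≤ g(x) ≤ 2x − x² for all x ∈ [0,1]. For a binary word b = (b₁,…,b_n) ∈ {0,1}^n with w(b) ones, define h_b(x) = h_{b₁} ∘ h_{b₂} ∘ ⋯ ∘ h_{b_n}(x), where h₀ = g and h₁(x) = x². If b, b′ ∈ {0,1}^n satisfy w(b) > w(b′), then there exists δ > 0 such that for all x ∈ (0, δ), h_b(x) < h_{b′}(x). (Consequently, the polar code of block length N = 2^n and rate R designed for transmission over the channel W_α = αW + (1−α)W^{opt}, whose Bhattacharyya parameter is αZ(W), becomes a Reed–Muller code as α → 0.) -/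
/-!
Near `0` the map `g` is trapped between `x` and `2x`, so only the squarings affect the order of
vanishing: `x ^ 2 ^ w(b) ≤ h_b(x) ≤ C * x ^ 2 ^ w(b)` on `[0,1]`, with `C ≥ 1` depending only on `b`
(`pow_le_polarComp`, `exists_polarComp_le`). If `w(b') < w(b)` then `2 ^ w(b') + 1 ≤ 2 ^ w(b)`,
hence `h_b(x) ≤ C x * x ^ 2 ^ w(b') < x ^ 2 ^ w(b') ≤ h_{b'}(x)` as soon as `0 < x < 1 / C`.
-/

/-- For a binary word `b = (b₁, …, bₙ)` (as a list, `b₁` first),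
`h_b(x) = h_{b₁} ∘ h_{b₂} ∘ ⋯ ∘ h_{bₙ}(x)`, where `h₀ = g`, `h₁(x) = x²`,
and `h_{bₙ}` is applied first (innermost). -/
def polarComp (g : ℝ → ℝ) : List Bool → ℝ → ℝ
  | [] => id
  | c :: rest => (if c then fun y : ℝ => y ^ 2 else g) ∘ polarComp g rest

lemma polarComp_mem_Icc {g : ℝ → ℝ}
    (hg_mem : ∀ x ∈ Set.Icc (0 : ℝ) 1, g x ∈ Set.Icc (0 : ℝ) 1)
    (b : List Bool) {x : ℝ} (hx : x ∈ Set.Icc (0 : ℝ) 1) :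
    polarComp g b x ∈ Set.Icc (0 : ℝ) 1 := by
  induction b with
  | nil => simpa [polarComp] using hx
  | cons c t ih =>
    cases c
    · simpa [polarComp] using hg_mem _ ih
    · have h : polarComp g (true :: t) x = polarComp g t x ^ 2 := by simp [polarComp]
      rw [h]
      exact ⟨sq_nonneg _, pow_le_one₀ ih.1 ih.2⟩

lemma pow_le_polarComp {g : ℝ → ℝ}
    (hg_mem : ∀ x ∈ Set.Icc (0 : ℝ) 1, g x ∈ Set.Icc (0 : ℝ) 1)
    (hg : ∀ x ∈ Set.Icc (0 : ℝ) 1, x ≤ g x ∧ g x ≤ 2 * x - x ^ 2)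
    (b : List Bool) {x : ℝ} (hx : x ∈ Set.Icc (0 : ℝ) 1) :
    x ^ 2 ^ b.count true ≤ polarComp g b x := by
  induction b with
  | nil => simp [polarComp]
  | cons c t ih =>
    have hmem := polarComp_mem_Icc hg_mem t hx
    cases c
    · simpa [polarComp] using ih.trans (hg _ hmem).1
    · have h : polarComp g (true :: t) x = polarComp g t x ^ 2 := by simp [polarComp]
      rw [h, List.count_cons_self, pow_succ, pow_mul]
      exact pow_le_pow_left₀ (pow_nonneg hx.1 _) ih 2

/-- The constant doubles under `g` and squares under `x ↦ x ^ 2`. -/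
lemma exists_polarComp_le {g : ℝ → ℝ}
    (hg_mem : ∀ x ∈ Set.Icc (0 : ℝ) 1, g x ∈ Set.Icc (0 : ℝ) 1)
    (hg : ∀ x ∈ Set.Icc (0 : ℝ) 1, x ≤ g x ∧ g x ≤ 2 * x - x ^ 2)
    (b : List Bool) :
    ∃ C : ℝ, 1 ≤ C ∧ ∀ x ∈ Set.Icc (0 : ℝ) 1, polarComp g b x ≤ C * x ^ 2 ^ b.count true := by
  induction b with
  | nil => exact ⟨1, le_rfl, fun x _ => by simp [polarComp]⟩
  | cons c t ih =>
    obtain ⟨C, hC, hle⟩ := ih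
    cases c
    · refine ⟨2 * C, by linarith, fun x hx => ?_⟩
      have hmem := polarComp_mem_Icc hg_mem t hx
      have h : polarComp g (false :: t) x = g (polarComp g t x) := by simp [polarComp]
      rw [h, List.count_cons_of_ne (by decide)]
      nlinarith [(hg _ hmem).2, hle x hx, sq_nonneg (polarComp g t x)]
    · refine ⟨C ^ 2, one_le_pow₀ hC, fun x hx => ?_⟩
      have hmem := polarComp_mem_Icc hg_mem t hx
      have h : polarComp g (true :: t) x = polarComp g t x ^ 2 := by simp [polarComp]
      rw [h, List.count_cons_self, pow_succ 2 (t.count true), pow_mul, ← mul_pow]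
      exact pow_le_pow_left₀ hmem.1 (hle x hx) 2

/-- Let `g : [0,1] → [0,1]` satisfy `x ≤ g(x) ≤ 2x - x²` on `[0,1]`. If
`b, b' ∈ {0,1}^n` satisfy `w(b) > w(b')`, then there is `δ > 0` such that
`h_b(x) < h_{b'}(x)` for all `x ∈ (0, δ)`. Consequently, the polar code designed
for `W_α = αW + (1-α)W^{opt}` becomes a Reed–Muller code as `α → 0`. -/
theorem polarComp_weight_dominates (g : ℝ → ℝ)
    (hg_mem : ∀ x ∈ Set.Icc (0 : ℝ) 1, g x ∈ Set.Icc (0 : ℝ) 1)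
    (hg : ∀ x ∈ Set.Icc (0 : ℝ) 1, x ≤ g x ∧ g x ≤ 2 * x - x ^ 2)
    (b b' : List Bool) (hn : b.length = b'.length)
    (hw : b'.count true < b.count true) :
    ∃ δ : ℝ, 0 < δ ∧ ∀ x ∈ Set.Ioo (0 : ℝ) δ,
      polarComp g b x < polarComp g b' x := by
  obtain ⟨C, hC, hle⟩ := exists_polarComp_le hg_mem hg b
  have hC0 : 0 < C := by linarith
  refine ⟨1 / C, by positivity, fun x hx => ?_⟩
  have hCx : C * x < 1 := by
    have := (lt_div_iff₀ hC0).1 hx.2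
    linarith
  have hx1 : x ∈ Set.Icc (0 : ℝ) 1 := ⟨hx.1.le, by nlinarith [hx.1]⟩
  have hexp : 2 ^ b'.count true + 1 ≤ 2 ^ b.count true :=
    Nat.pow_lt_pow_right (by norm_num) hw
  have hpos : 0 < x ^ 2 ^ b'.count true := pow_pos hx.1 _
  calc polarComp g b x ≤ C * x ^ 2 ^ b.count true := hle x hx1
    _ ≤ C * x ^ (2 ^ b'.count true + 1) :=
        mul_le_mul_of_nonneg_left (pow_le_pow_of_le_one hx1.1 hx1.2 hexp) hC0.le
    _ = C * x * x ^ 2 ^ b'.count true := by ring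
    _ < x ^ 2 ^ b'.count true := mul_lt_of_lt_one_left hpos hCx
    _ ≤ polarComp g b' x := pow_le_polarComp hg_mem hg b' hx1
end
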